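/- Let (Ω, P) be a probability space and let A, B, C, D be events with P(C ∪ D) > 0, P(C) > 0, P(D) > 0, P(Cᶜ ∩ D) > 0, P(C ∩ Dᶜ) > 0, P(C ∩ D) > 0 and P(Cᶜ) > 0, P(Dᶜ) > 0. Assume that for each of the three conditioning events E ∈ {Cᶜ ∩ D, C ∩ Dᶜ, C ∩ D}, Aᶜ and Bᶜ are conditionally independent given E, i.e. P[Aᶜ ∩ Bᶜ | E] = P[Aᶜ | E] · P[Bᶜ | E]; assume moreover P[Aᶜ | Cᶜ ∩ D] = P[Aᶜ | Cᶜ], P[Bᶜ | Cᶜ ∩ D] = P[Bᶜ | D], P[Aᶜ | C ∩ Dᶜ] = P[Aᶜ | C], P[Bᶜ | C ∩ Dᶜ] = P[Bᶜ | Dᶜ], P[Aᶜ | C ∩ D] = P[Aᶜ | C], and P[Bᶜ | C ∩ D] = P[Bᶜ | D]. If P[Aᶜ | C] ≤ β₁ and P[Bᶜ | D] ≤ β₂ for nonnegative reals β₁, β₂, then P[(A ∪ B)ᶜ | C ∪ D] ≤ β₁ + β₂. -/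

import Mathlib

open MeasureTheory

/-- Conditional probability `P[E|F] = P(E ∩ F)/P(F)` as a real number. -/
noncomputable def condProb {Ω : Type*} [MeasurableSpace Ω] (P : Measure Ω)
    (E F : Set Ω) : ℝ :=
  (P (E ∩ F)).toReal / (P F).toReal

/-- β-bound on the FNR of a 2-query disjunction mechanism:
if `P[Aᶜ|C] ≤ β₁` and `P[Bᶜ|D] ≤ β₂`, then `P[(A ∪ B)ᶜ | C ∪ D] ≤ β₁ + β₂`. -/
theorem disj_fnr_bound {Ω : Type*} [MeasurableSpace Ω] (P : Measure Ω)
    [IsProbabilityMeasure P] (A B C D : Set Ω)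
    (hA : MeasurableSet A) (hB : MeasurableSet B)
    (hC : MeasurableSet C) (hD : MeasurableSet D)
    (hCuD : 0 < P (C ∪ D)) (hC0 : 0 < P C) (hD0 : 0 < P D)
    (hCcD : 0 < P (Cᶜ ∩ D)) (hCDc : 0 < P (C ∩ Dᶜ)) (hCD : 0 < P (C ∩ D))
    (hCc : 0 < P Cᶜ) (hDc : 0 < P Dᶜ)
    (hindep1 : condProb P (Aᶜ ∩ Bᶜ) (Cᶜ ∩ D) =
      condProb P Aᶜ (Cᶜ ∩ D) * condProb P Bᶜ (Cᶜ ∩ D))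
    (hindep2 : condProb P (Aᶜ ∩ Bᶜ) (C ∩ Dᶜ) =
      condProb P Aᶜ (C ∩ Dᶜ) * condProb P Bᶜ (C ∩ Dᶜ))
    (hindep3 : condProb P (Aᶜ ∩ Bᶜ) (C ∩ D) =
      condProb P Aᶜ (C ∩ D) * condProb P Bᶜ (C ∩ D))
    (h1 : condProb P Aᶜ (Cᶜ ∩ D) = condProb P Aᶜ Cᶜ)
    (h2 : condProb P Bᶜ (Cᶜ ∩ D) = condProb P Bᶜ D)
    (h3 : condProb P Aᶜ (C ∩ Dᶜ) = condProb P Aᶜ C)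
    (h4 : condProb P Bᶜ (C ∩ Dᶜ) = condProb P Bᶜ Dᶜ)
    (h5 : condProb P Aᶜ (C ∩ D) = condProb P Aᶜ C)
    (h6 : condProb P Bᶜ (C ∩ D) = condProb P Bᶜ D)
    (β₁ β₂ : ℝ) (hβ₁ : 0 ≤ β₁) (hβ₂ : 0 ≤ β₂)
    (hb1 : condProb P Aᶜ C ≤ β₁) (hb2 : condProb P Bᶜ D ≤ β₂) :
    condProb P (A ∪ B)ᶜ (C ∪ D) ≤ β₁ + β₂ := by
  unfold condProb at hb1 hb2 ⊢
  have pos : ∀ S : Set Ω, 0 < P S → 0 < (P S).toReal := fun S h =>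
    ENNReal.toReal_pos h.ne' (measure_ne_top P S)
  have mono : ∀ S T : Set Ω, S ⊆ T → (P S).toReal ≤ (P T).toReal := fun S T h =>
    ENNReal.toReal_mono (measure_ne_top P T) (measure_mono h)
  rw [div_le_iff₀ (pos _ hC0)] at hb1
  rw [div_le_iff₀ (pos _ hD0)] at hb2
  rw [div_le_iff₀ (pos _ hCuD)]
  have hsub : (A ∪ B)ᶜ ∩ (C ∪ D) ⊆ (Aᶜ ∩ C) ∪ (Bᶜ ∩ D) := by
    rintro x ⟨hx, hc | hd⟩
    · exact Or.inl ⟨fun h => hx (Or.inl h), hc⟩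
    · exact Or.inr ⟨fun h => hx (Or.inr h), hd⟩
  have hle := mono _ _ hsub
  have hun : (P ((Aᶜ ∩ C) ∪ (Bᶜ ∩ D))).toReal ≤
      (P (Aᶜ ∩ C)).toReal + (P (Bᶜ ∩ D)).toReal :=
    measureReal_union_le (μ := P) _ _
  have e1 := mul_le_mul_of_nonneg_left (mono C (C ∪ D) Set.subset_union_left) hβ₁
  have e2 := mul_le_mul_of_nonneg_left (mono D (C ∪ D) Set.subset_union_right) hβ₂
  linarith
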